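/- arXiv:1908.04544 — 2 statements merged into one kernel-verified Lean document; each statement's English description precedes it below -/
import Mathlib

section
/- A symmetric bilinear form B on 𝔤 = sp(2,ℝ) satisfies (i) B(x,y) = 0 whenever x ∈ span(e₈,e₉,e₁₀), and (ii) B([z,x],y) + B(x,[z,y]) = 0 for all z ∈ span(e₈,e₉,e₁₀) and all x,y ∈ 𝔤, if and only if there exist real constants g₂₂, g₂₄, g₄₄, g₃₅, g₂₆, g₄₆, g₆₆ such that B = g₂₂(e²)² + 2g₂₄ e²⊙e⁴ + g₄₄(e⁴)² + 2g₃₅(e³⊙e⁵ − e¹⊙e⁷) + 2g₂₆ e²⊙e⁶ + 2g₄₆ e⁴⊙e⁶ + g₆₆(e⁶)². In particular, the space of such forms is 7-dimensional. -/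
/-!
STATEMENT 9 (Proposition 1 of the paper): a symmetric bilinear form B on 𝔤 = sp(2,ℝ)
vanishes on span(e₈,e₉,e₁₀) and is infinitesimally invariant along it iff it is of the
form g₂₂(e²)² + 2g₂₄e²⊙e⁴ + g₄₄(e⁴)² + 2g₃₅(e³⊙e⁵ − e¹⊙e⁷) + 2g₂₆e²⊙e⁶ + 2g₄₆e⁴⊙e⁶
+ g₆₆(e⁶)²; the space of such forms is 7-dimensional.
Here e₁=E₂, e₂=E₃, e₃=E₄, e₄=E₆, e₅=E₇, e₆=E₈, e₇=E₉, e₈=E₁, e₉=E₅, e₁₀=E₁₀ (0-based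
`eSp i` = e_{i+1}), `ε` is the dual basis (e^I), and α⊙β is the symmetric product.
-/

noncomputable section
open Matrix
attribute [local instance 100] LieRing.ofAssociativeRing

/-- The matrix `J` defining `sp(2,ℝ)`. -/
def Jm : Matrix (Fin 4) (Fin 4) ℝ :=
  !![0, 0, 0, 1;
     0, 0, 1, 0;
     0, -1, 0, 0;
     -1, 0, 0, 0]

/-- The general element `E(a₁,…,a₁₀)` of `sp(2,ℝ)` (indices shifted: `a i` is `a_{i+1}`). -/
def Emat (a : Fin 10 → ℝ) : Matrix (Fin 4) (Fin 4) ℝ :=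
  !![a 4, a 6, a 8, 2 * a 9;
     -(a 3), a 5, a 7, a 8;
     a 1, a 2, -(a 5), -(a 6);
     -(2 * a 0), a 1, a 3, -(a 4)]

/-- The basis `E_{i+1} = E(0,…,1,…,0)` of `sp(2,ℝ)`. -/
def E (i : Fin 10) : Matrix (Fin 4) (Fin 4) ℝ := Emat (Pi.single i 1)

set_option maxHeartbeats 1000000 in
lemma Emat_rel (a : Fin 10 → ℝ) : (Emat a)ᵀ * Jm + Jm * Emat a = 0 := by
  rw [Emat, Jm]
  ext i j
  fin_cases i <;> fin_cases j <;>
    simp [Matrix.mul_apply, Fin.sum_univ_four, Matrix.transpose_apply,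
      Matrix.vecHead, Matrix.vecTail]

/-- `sp(2,ℝ)` as a Lie subalgebra of `gl(4,ℝ)` (with the commutator bracket). -/
def sp2 : LieSubalgebra ℝ (Matrix (Fin 4) (Fin 4) ℝ) where
  carrier := {X | Xᵀ * Jm + Jm * X = 0}
  zero_mem' := by simp
  add_mem' := by
    intro x y hx hy
    simp only [Set.mem_setOf_eq] at *
    rw [transpose_add, add_mul, mul_add]
    calc xᵀ * Jm + yᵀ * Jm + (Jm * x + Jm * y)
        = (xᵀ * Jm + Jm * x) + (yᵀ * Jm + Jm * y) := by abel
      _ = 0 := by rw [hx, hy, add_zero]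
  smul_mem' := by
    intro c x hx
    simp only [Set.mem_setOf_eq] at *
    rw [transpose_smul, smul_mul_assoc, mul_smul_comm, ← smul_add, hx, smul_zero]
  lie_mem' := by
    intro x y hx hy
    simp only [Set.mem_setOf_eq] at *
    have hx' : xᵀ * Jm = -(Jm * x) := eq_neg_of_add_eq_zero_left hx
    have hy' : yᵀ * Jm = -(Jm * y) := eq_neg_of_add_eq_zero_left hy
    have h1 : yᵀ * xᵀ * Jm = Jm * (y * x) := by
      rw [mul_assoc, hx', mul_neg, ← mul_assoc, hy', neg_mul, neg_neg, mul_assoc]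
    have h2 : xᵀ * yᵀ * Jm = Jm * (x * y) := by
      rw [mul_assoc, hy', mul_neg, ← mul_assoc, hx', neg_mul, neg_neg, mul_assoc]
    rw [Ring.lie_def, transpose_sub, transpose_mul, transpose_mul, sub_mul, mul_sub, h1, h2]
    abel

lemma E_mem (i : Fin 10) : E i ∈ sp2 := Emat_rel _

/-- The basis vectors `E_I` as elements of `sp(2,ℝ)`. -/
def Esp (i : Fin 10) : sp2 := ⟨E i, E_mem i⟩

/-- The basis (e_I) (0-based) of sp(2,ℝ). -/
def eSp : Fin 10 → sp2 :=
  ![Esp 1, Esp 2, Esp 3, Esp 5, Esp 6, Esp 7, Esp 8, Esp 0, Esp 4, Esp 9]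

/-- The symmetric product of two 1-forms, evaluated on a pair of vectors:
(α⊙β)(X,Y) = (α(X)β(Y) + α(Y)β(X))/2. -/
def sprod (α β : sp2 →ₗ[ℝ] ℝ) (X Y : sp2) : ℝ := (α X * β Y + α Y * β X) / 2

/-- span(e₈,e₉,e₁₀) = span(E₁,E₅,E₁₀), i.e. sl(2,ℝ)_l, inside the matrices. -/
def spanL : Submodule ℝ (Matrix (Fin 4) (Fin 4) ℝ) := Submodule.span ℝ {E 0, E 4, E 9}

/-!
As a module over `sl(2,ℝ)_l`, the Lie algebra `sp(2,ℝ)` splits into `sl(2,ℝ)_l` itself, a trivial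
summand `⟨e₂, e₄, e₆⟩` and two copies `⟨e₅, e₁⟩`, `⟨e₇, e₃⟩` of the standard representation. The
quotient by `sl(2,ℝ)_l` therefore carries the six products of `e², e⁴, e⁶` as invariant symmetric
forms, no mixed ones, and one form pairing the two standard copies by the determinant. Concretely,
a pairing of two eigenvectors of `ad e₉` vanishes unless their weights cancel, and the lowering
operator `ad e₈` relates the surviving pairings of weights `1` and `-1`.
-/

section BilinForm

open LinearMap (BilinForm)

variable {R M : Type*} [CommSemiring R] [AddCommMonoid M] [Module R M]

lemma linearIndependent_of_apply_apply_eq_ite {ι : Type*} [DecidableEq ι]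
    {B : ι → BilinForm R M} {x y : ι → M}
    (h : ∀ k l, B k (x l) (y l) = if k = l then 1 else 0) : LinearIndependent R B := by
  refine linearIndependent_iffₛ.mpr fun f g hfg ↦ Finsupp.ext fun l ↦ ?_
  simpa [Finsupp.linearCombination_apply, Finsupp.sum, LinearMap.sum_apply, h] using
    LinearMap.congr_fun₂ hfg (x l) (y l)

variable [Invertible (2 : R)]

/-- The symmetric product `α ⊙ β = ½ (α ⊗ β + β ⊗ α)` of two linear forms, as a bilinear form. -/
def symmProd (α β : Module.Dual R M) : BilinForm R M :=
  (⅟2 : R) • (BilinForm.linMulLin α β + BilinForm.linMulLin β α)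

lemma symmProd_apply (α β : Module.Dual R M) (x y : M) :
    symmProd α β x y = ⅟2 * (α x * β y + β x * α y) := rfl

end BilinForm

section BasicForms

open LinearMap (BilinForm)

variable {R L : Type*} [CommRing R] [LieRing L] [LieAlgebra R L]

/-- The symmetric bilinear forms on a Lie algebra `L` that are basic along `H`: they vanish on `H`
and are infinitesimally invariant under it. For `H` the Lie algebra of a connected subgroup, these
are the invariant symmetric tensors that descend to the homogeneous space. -/
def basicSymmForms (H : Submodule R L) : Submodule R (BilinForm R L) where
  carrier := {B | (∀ x y, B x y = B y x) ∧ (∀ x y, x ∈ H → B x y = 0) ∧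
    ∀ z x y, z ∈ H → B ⁅z, x⁆ y + B x ⁅z, y⁆ = 0}
  zero_mem' := by simp
  add_mem' := by
    rintro B C ⟨symmB, horB, invB⟩ ⟨symmC, horC, invC⟩
    refine ⟨fun x y ↦ ?_, fun x y hx ↦ ?_, fun z x y hz ↦ ?_⟩
    · simp only [LinearMap.add_apply, symmB x y, symmC x y]
    · simp only [LinearMap.add_apply, horB x y hx, horC x y hx, add_zero]
    · simp only [LinearMap.add_apply]
      linear_combination invB z x y hz + invC z x y hz
  smul_mem' := by
    rintro c B ⟨symmB, horB, invB⟩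
    refine ⟨fun x y ↦ ?_, fun x y hx ↦ ?_, fun z x y hz ↦ ?_⟩
    · simp only [LinearMap.smul_apply, symmB x y]
    · simp only [LinearMap.smul_apply, horB x y hx, smul_zero]
    · simp only [LinearMap.smul_apply, ← smul_add, invB z x y hz, smul_zero]

lemma apply_eq_zero_of_weight_add_ne_zero [NoZeroDivisors R] {B : BilinForm R L} {z x y : L}
    {a b : R} (hB : B ⁅z, x⁆ y + B x ⁅z, y⁆ = 0) (hx : ⁅z, x⁆ = a • x) (hy : ⁅z, y⁆ = b • y)
    (hab : a + b ≠ 0) : B x y = 0 := by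
  have h : (a + b) * B x y = 0 := by
    simpa only [hx, hy, map_smul, LinearMap.smul_apply, smul_eq_mul, ← add_mul] using hB
  exact (mul_eq_zero.mp h).resolve_left hab

variable [Invertible (2 : R)]

lemma symmProd_mem_basicSymmForms {H : Submodule R L} {α β : Module.Dual R L}
    (hα : ∀ z ∈ H, α z = 0) (hβ : ∀ z ∈ H, β z = 0)
    (hα_lie : ∀ z ∈ H, ∀ x, α ⁅z, x⁆ = 0) (hβ_lie : ∀ z ∈ H, ∀ x, β ⁅z, x⁆ = 0) :
    symmProd α β ∈ basicSymmForms H := by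
  refine ⟨fun x y ↦ ?_, fun x y hx ↦ ?_, fun z x y hz ↦ ?_⟩
  · simp only [symmProd_apply]
    ring
  · simp only [symmProd_apply, hα x hx, hβ x hx]
    ring
  · simp only [symmProd_apply, hα_lie z hz, hβ_lie z hz]
    ring

/-- The pairs `(p, q)` and `(p', q')` transform under `H` by the same trace-free `2 × 2` matrices,
which preserve the determinant `p q' - p' q`. -/
lemma symmProd_sub_symmProd_mem_basicSymmForms {H : Submodule R L} {p q p' q' : Module.Dual R L}
    (hp : ∀ z ∈ H, p z = 0) (hq : ∀ z ∈ H, q z = 0)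
    (hp' : ∀ z ∈ H, p' z = 0) (hq' : ∀ z ∈ H, q' z = 0)
    (h_lie : ∀ z ∈ H, ∃ a b c : R, ∀ x,
      p ⁅z, x⁆ = a * p x + b * q x ∧ q ⁅z, x⁆ = c * p x - a * q x ∧
      p' ⁅z, x⁆ = a * p' x + b * q' x ∧ q' ⁅z, x⁆ = c * p' x - a * q' x) :
    symmProd p q' - symmProd p' q ∈ basicSymmForms H := by
  refine ⟨fun x y ↦ ?_, fun x y hx ↦ ?_, fun z x y hz ↦ ?_⟩
  · simp only [LinearMap.sub_apply, symmProd_apply]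
    ring
  · simp only [LinearMap.sub_apply, symmProd_apply, hp x hx, hq x hx, hp' x hx, hq' x hx]
    ring
  · obtain ⟨a, b, c, h⟩ := h_lie z hz
    obtain ⟨hpx, hqx, hpx', hqx'⟩ := h x
    obtain ⟨hpy, hqy, hpy', hqy'⟩ := h y
    simp only [LinearMap.sub_apply, symmProd_apply, hpx, hqx, hpx', hqx', hpy, hqy, hpy', hqy']
    ring

end BasicForms

lemma Emat_add (a b : Fin 10 → ℝ) : Emat (a + b) = Emat a + Emat b := by
  ext r s
  fin_cases r <;> fin_cases s <;> simp [Emat] <;> ring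

lemma Emat_smul (c : ℝ) (a : Fin 10 → ℝ) : Emat (c • a) = c • Emat a := by
  ext r s
  fin_cases r <;> fin_cases s <;> simp [Emat] <;> ring

/-- The parameters `a₁, …, a₁₀` read off from the entries of `E(a₁, …, a₁₀)`. -/
def entryParams (X : Matrix (Fin 4) (Fin 4) ℝ) : Fin 10 → ℝ :=
  ![-(X 3 0) / 2, X 2 0, X 2 1, X 3 2, X 0 0, X 1 1, X 0 1, X 1 2, X 0 2, X 0 3 / 2]

lemma entryParams_Emat (a : Fin 10 → ℝ) : entryParams (Emat a) = a := by
  ext i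
  fin_cases i <;> simp [entryParams, Emat]

lemma Emat_entryParams {X : Matrix (Fin 4) (Fin 4) ℝ} (hX : X ∈ sp2) :
    Emat (entryParams X) = X := by
  have entry_eq_zero (r s : Fin 4) : (Xᵀ * Jm + Jm * X) r s = 0 := congrFun₂ hX r s
  simp only [Jm, Matrix.add_apply, Matrix.mul_apply, Matrix.transpose_apply, Fin.sum_univ_four]
    at entry_eq_zero
  have h31 : X 3 1 = X 2 0 := by simpa [add_eq_zero_iff_eq_neg'] using entry_eq_zero 0 1
  have h10 : X 1 0 = -X 3 2 := by simpa [add_eq_zero_iff_eq_neg] using entry_eq_zero 0 2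
  have h33 : X 3 3 = -X 0 0 := by simpa [add_eq_zero_iff_eq_neg'] using entry_eq_zero 0 3
  have h22 : X 2 2 = -X 1 1 := by simpa [add_eq_zero_iff_eq_neg'] using entry_eq_zero 1 2
  have h23 : X 2 3 = -X 0 1 := by simpa [add_eq_zero_iff_eq_neg'] using entry_eq_zero 1 3
  have h13 : X 1 3 = X 0 2 := by simpa [add_eq_zero_iff_eq_neg'] using entry_eq_zero 2 3
  ext r s
  fin_cases r <;> fin_cases s <;> simp [Emat, entryParams, *] <;> ring

/-- The parametrization `a ↦ E(a)` as a linear isomorphism onto `sp(2,ℝ)`. -/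
def EmatEquiv : (Fin 10 → ℝ) ≃ₗ[ℝ] sp2 where
  toFun a := ⟨Emat a, Emat_rel a⟩
  map_add' a b := Subtype.ext (Emat_add a b)
  map_smul' c a := Subtype.ext (Emat_smul c a)
  invFun X := entryParams X
  left_inv := entryParams_Emat
  right_inv X := Subtype.ext (Emat_entryParams X.2)

/-- The 0-based renumbering `e_{i+1} = E_{eIndex i + 1}` of the basis vectors. -/
def eIndex : Equiv.Perm (Fin 10) :=
  Equiv.ofBijective ![1, 2, 3, 5, 6, 7, 8, 0, 4, 9] (by decide)

lemma eSp_eq_EmatEquiv_single (i : Fin 10) : eSp i = EmatEquiv (Pi.single (eIndex i) 1) := by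
  fin_cases i <;> rfl

/-- The family `eSp` as a basis of `sp(2,ℝ)`. -/
def eBasis : Module.Basis (Fin 10) ℝ sp2 :=
  ((Pi.basisFun ℝ (Fin 10)).map EmatEquiv).reindex eIndex.symm

lemma eBasis_apply (i : Fin 10) : eBasis i = eSp i := by
  simp [eBasis, eSp_eq_EmatEquiv_single]

lemma coord_eSp (i j : Fin 10) : eBasis.coord i (eSp j) = if i = j then 1 else 0 := by
  rw [← eBasis_apply, eBasis.coord_apply, eBasis.repr_self_apply]
  simp only [eq_comm]

lemma eq_coord_eBasis {ε : Fin 10 → Module.Dual ℝ sp2}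
    (hdual : ∀ i j, ε i (eSp j) = if i = j then 1 else 0) : ε = eBasis.coord := by
  refine funext fun i ↦ eBasis.ext fun j ↦ ?_
  rw [eBasis_apply, hdual, coord_eSp]

lemma coord_EmatEquiv (i : Fin 10) (a : Fin 10 → ℝ) :
    eBasis.coord i (EmatEquiv a) = a (eIndex i) := by
  simp [eBasis]

/-- `sl(2,ℝ)_l = span(e₈, e₉, e₁₀)` as a subspace of `sp(2,ℝ)`. -/
def slL : Submodule ℝ sp2 := spanL.comap sp2.toSubmodule.subtype

lemma mem_slL_iff {z : sp2} :
    z ∈ slL ↔ ∃ a b c : ℝ, EmatEquiv ![a, 0, 0, 0, b, 0, 0, 0, 0, c] = z := by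
  have h (a b c : ℝ) :
      a • E 0 + b • E 4 + c • E 9 = Emat ![a, 0, 0, 0, b, 0, 0, 0, 0, c] := by
    simp only [E, ← Emat_smul, ← Emat_add]
    congr 1
    ext i
    fin_cases i <;> simp
  simp only [slL, Submodule.mem_comap, spanL, Submodule.mem_span_triple, h, Subtype.ext_iff]
  rfl

lemma lie_EmatEquiv (a b c : ℝ) (x : Fin 10 → ℝ) :
    ⁅EmatEquiv ![a, 0, 0, 0, b, 0, 0, 0, 0, c], EmatEquiv x⁆ =
      EmatEquiv ![2 * a * x 4 - 2 * b * x 0, -(b * x 1) - 2 * a * x 6, 0, -(b * x 3) - 2 * a * x 8,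
        4 * a * x 9 - 4 * c * x 0, 0, b * x 6 + 2 * c * x 1, 0, b * x 8 + 2 * c * x 3,
        2 * b * x 9 - 2 * c * x 4] := by
  apply Subtype.ext
  rw [LieSubalgebra.coe_bracket, Ring.lie_def]
  ext r s
  fin_cases r <;> fin_cases s <;> simp [EmatEquiv, Emat] <;> ring

lemma eSp_seven : eSp 7 = EmatEquiv ![1, 0, 0, 0, 0, 0, 0, 0, 0, 0] := by
  rw [eSp_eq_EmatEquiv_single]
  congr 1
  ext i
  fin_cases i <;> rfl

lemma eSp_eight : eSp 8 = EmatEquiv ![0, 0, 0, 0, 1, 0, 0, 0, 0, 0] := by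
  rw [eSp_eq_EmatEquiv_single]
  congr 1
  ext i
  fin_cases i <;> rfl

lemma eSp_mem_slL {i : Fin 10} (hi : 7 ≤ i) : eSp i ∈ slL := by
  change (eSp i : Matrix (Fin 4) (Fin 4) ℝ) ∈ spanL
  refine Submodule.subset_span ?_
  fin_cases i <;> first | exact absurd hi (by decide) | simp [eSp, Esp]

/-- The eigenvalue of `ad e₉` on `e_{i+1}`, where `e₉` spans a Cartan subalgebra of `sl(2,ℝ)_l`. -/
def eWeight : Fin 10 → ℤ := ![-1, 0, -1, 0, 1, 0, 1, -2, 0, 2]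

lemma lie_eSp_eight (i : Fin 10) : ⁅eSp 8, eSp i⁆ = (eWeight i : ℝ) • eSp i := by
  rw [eSp_eight, eSp_eq_EmatEquiv_single i, lie_EmatEquiv, ← map_smul]
  congr 1
  ext k
  fin_cases i <;> fin_cases k <;> simp [eIndex, eWeight]

lemma lie_eSp_seven_four : ⁅eSp 7, eSp 4⁆ = (-2 : ℝ) • eSp 0 := by
  rw [eSp_seven, eSp_eq_EmatEquiv_single 4, eSp_eq_EmatEquiv_single 0, lie_EmatEquiv, ← map_smul]
  congr 1
  ext k
  fin_cases k <;> simp [eIndex]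

lemma lie_eSp_seven_six : ⁅eSp 7, eSp 6⁆ = (-2 : ℝ) • eSp 2 := by
  rw [eSp_seven, eSp_eq_EmatEquiv_single 6, eSp_eq_EmatEquiv_single 2, lie_EmatEquiv, ← map_smul]
  congr 1
  ext k
  fin_cases k <;> simp [eIndex]

section BasicFormsSlL

variable {B C : LinearMap.BilinForm ℝ sp2}

lemma apply_eSp_eq_zero_of_eWeight_add_ne_zero (hB : B ∈ basicSymmForms slL) {i j : Fin 10}
    (hij : eWeight i + eWeight j ≠ 0) : B (eSp i) (eSp j) = 0 :=
  apply_eq_zero_of_weight_add_ne_zero (hB.2.2 (eSp 8) _ _ (eSp_mem_slL (by decide)))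
    (lie_eSp_eight i) (lie_eSp_eight j) (by exact_mod_cast hij)

lemma apply_eSp_zero_four (hB : B ∈ basicSymmForms slL) : B (eSp 0) (eSp 4) = 0 := by
  have h := hB.2.2 (eSp 7) (eSp 4) (eSp 4) (eSp_mem_slL le_rfl)
  simp only [lie_eSp_seven_four, map_smul, LinearMap.smul_apply, smul_eq_mul] at h
  linarith [hB.1 (eSp 0) (eSp 4)]

lemma apply_eSp_two_six (hB : B ∈ basicSymmForms slL) : B (eSp 2) (eSp 6) = 0 := by
  have h := hB.2.2 (eSp 7) (eSp 6) (eSp 6) (eSp_mem_slL le_rfl)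
  simp only [lie_eSp_seven_six, map_smul, LinearMap.smul_apply, smul_eq_mul] at h
  linarith [hB.1 (eSp 2) (eSp 6)]

lemma apply_eSp_zero_six (hB : B ∈ basicSymmForms slL) :
    B (eSp 0) (eSp 6) = -B (eSp 2) (eSp 4) := by
  have h := hB.2.2 (eSp 7) (eSp 4) (eSp 6) (eSp_mem_slL le_rfl)
  simp only [lie_eSp_seven_four, lie_eSp_seven_six, map_smul, LinearMap.smul_apply,
    smul_eq_mul] at h
  linarith [hB.1 (eSp 2) (eSp 4)]

/-- The index pairs of the seven coefficients `g₂₂, g₂₄, g₄₄, g₃₅, g₂₆, g₄₆, g₆₆`, 0-based. -/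
def coeffIndex : Fin 7 → Fin 10 × Fin 10 :=
  ![(1, 1), (1, 3), (3, 3), (2, 4), (1, 5), (3, 5), (5, 5)]

lemma mem_range_coeffIndex_or_of_eWeight_add_eq_zero : ∀ {i j : Fin 10}, i ≤ j → j < 7 →
    eWeight i + eWeight j = 0 →
    (∃ k, coeffIndex k = (i, j)) ∨ (i, j) = (0, 4) ∨ (i, j) = (0, 6) ∨ (i, j) = (2, 6) := by
  decide

lemma eq_of_apply_coeffIndex_eq (hB : B ∈ basicSymmForms slL) (hC : C ∈ basicSymmForms slL)
    (h : ∀ k, B (eSp (coeffIndex k).1) (eSp (coeffIndex k).2) =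
      C (eSp (coeffIndex k).1) (eSp (coeffIndex k).2)) : B = C := by
  refine LinearMap.BilinForm.ext_basis eBasis fun i j ↦ ?_
  simp only [eBasis_apply]
  wlog hij : i ≤ j generalizing i j
  · rw [hB.1, hC.1, this j i (le_of_not_ge hij)]
  rcases le_or_gt 7 j with hj | hj
  · rw [hB.1, hC.1, hB.2.1 _ _ (eSp_mem_slL hj), hC.2.1 _ _ (eSp_mem_slL hj)]
  by_cases hw : eWeight i + eWeight j = 0
  · obtain ⟨k, hk⟩ | h04 | h06 | h26 := mem_range_coeffIndex_or_of_eWeight_add_eq_zero hij hj hw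
    · simpa only [hk] using h k
    · obtain ⟨rfl, rfl⟩ := Prod.mk.inj h04
      rw [apply_eSp_zero_four hB, apply_eSp_zero_four hC]
    · obtain ⟨rfl, rfl⟩ := Prod.mk.inj h06
      rw [apply_eSp_zero_six hB, apply_eSp_zero_six hC]
      exact congrArg Neg.neg (h 3)
    · obtain ⟨rfl, rfl⟩ := Prod.mk.inj h26
      rw [apply_eSp_two_six hB, apply_eSp_two_six hC]
  · rw [apply_eSp_eq_zero_of_eWeight_add_ne_zero hB hw,
      apply_eSp_eq_zero_of_eWeight_add_ne_zero hC hw]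

end BasicFormsSlL

lemma symmProd_apply_eq_sprod (α β : Module.Dual ℝ sp2) (X Y : sp2) :
    symmProd α β X Y = sprod α β X Y := by
  simp only [symmProd_apply, sprod, invOf_eq_inv]
  ring

/-- The forms multiplying `g₂₂, g₂₄, g₄₄, g₃₅, g₂₆, g₄₆, g₆₆` in the general basic form. -/
def basicGenerator : Fin 7 → LinearMap.BilinForm ℝ sp2 :=
  ![symmProd (eBasis.coord 1) (eBasis.coord 1),
    (2 : ℝ) • symmProd (eBasis.coord 1) (eBasis.coord 3),
    symmProd (eBasis.coord 3) (eBasis.coord 3),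
    (2 : ℝ) • (symmProd (eBasis.coord 2) (eBasis.coord 4) -
      symmProd (eBasis.coord 0) (eBasis.coord 6)),
    (2 : ℝ) • symmProd (eBasis.coord 1) (eBasis.coord 5),
    (2 : ℝ) • symmProd (eBasis.coord 3) (eBasis.coord 5),
    symmProd (eBasis.coord 5) (eBasis.coord 5)]

lemma sum_smul_basicGenerator_apply (g : Fin 7 → ℝ) (X Y : sp2) :
    (∑ k, g k • basicGenerator k) X Y =
      g 0 * sprod (eBasis.coord 1) (eBasis.coord 1) X Y +
      2 * g 1 * sprod (eBasis.coord 1) (eBasis.coord 3) X Y +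
      g 2 * sprod (eBasis.coord 3) (eBasis.coord 3) X Y +
      2 * g 3 * (sprod (eBasis.coord 2) (eBasis.coord 4) X Y -
        sprod (eBasis.coord 0) (eBasis.coord 6) X Y) +
      2 * g 4 * sprod (eBasis.coord 1) (eBasis.coord 5) X Y +
      2 * g 5 * sprod (eBasis.coord 3) (eBasis.coord 5) X Y +
      g 6 * sprod (eBasis.coord 5) (eBasis.coord 5) X Y := by
  simp only [basicGenerator, Fin.sum_univ_seven, cons_val_zero, cons_val_one, cons_val,
    LinearMap.add_apply, LinearMap.smul_apply, LinearMap.sub_apply, symmProd_apply_eq_sprod,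
    smul_eq_mul]
  ring

lemma coord_eq_zero_of_mem_slL {i : Fin 10} (hi : i < 7) {z : sp2} (hz : z ∈ slL) :
    eBasis.coord i z = 0 := by
  obtain ⟨a, b, c, rfl⟩ := mem_slL_iff.mp hz
  rw [coord_EmatEquiv]
  fin_cases i <;> first | rfl | exact absurd hi (by decide)

lemma coord_lie_eq_zero {i : Fin 10} (hi : i = 1 ∨ i = 3 ∨ i = 5) {z : sp2} (hz : z ∈ slL)
    (x : sp2) : eBasis.coord i ⁅z, x⁆ = 0 := by
  obtain ⟨a, b, c, rfl⟩ := mem_slL_iff.mp hz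
  obtain ⟨x, rfl⟩ := EmatEquiv.surjective x
  rw [lie_EmatEquiv, coord_EmatEquiv]
  rcases hi with rfl | rfl | rfl <;> rfl

lemma exists_coord_lie_eq {z : sp2} (hz : z ∈ slL) :
    ∃ a b c : ℝ, ∀ x,
      eBasis.coord 2 ⁅z, x⁆ = a * eBasis.coord 2 x + b * eBasis.coord 6 x ∧
      eBasis.coord 6 ⁅z, x⁆ = c * eBasis.coord 2 x - a * eBasis.coord 6 x ∧
      eBasis.coord 0 ⁅z, x⁆ = a * eBasis.coord 0 x + b * eBasis.coord 4 x ∧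
      eBasis.coord 4 ⁅z, x⁆ = c * eBasis.coord 0 x - a * eBasis.coord 4 x := by
  obtain ⟨a, b, c, rfl⟩ := mem_slL_iff.mp hz
  refine ⟨-b, -(2 * a), 2 * c, fun x ↦ ?_⟩
  obtain ⟨x, rfl⟩ := EmatEquiv.surjective x
  simp only [lie_EmatEquiv, coord_EmatEquiv]
  refine ⟨?_, ?_, ?_, ?_⟩ <;> simp [eIndex] <;> ring

lemma basicGenerator_mem_basicSymmForms (k : Fin 7) :
    basicGenerator k ∈ basicSymmForms slL := by
  have hor {i : Fin 10} (hi : i < 7) : ∀ z ∈ slL, eBasis.coord i z = 0 :=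
    fun _ ↦ coord_eq_zero_of_mem_slL hi
  have mem_invariant {i j : Fin 10} (hi : i = 1 ∨ i = 3 ∨ i = 5) (hj : j = 1 ∨ j = 3 ∨ j = 5) :
      symmProd (eBasis.coord i) (eBasis.coord j) ∈ basicSymmForms slL :=
    symmProd_mem_basicSymmForms (hor (by lia)) (hor (by lia))
      (fun _ ↦ coord_lie_eq_zero hi) (fun _ ↦ coord_lie_eq_zero hj)
  have mem_det : symmProd (eBasis.coord 2) (eBasis.coord 4) -
      symmProd (eBasis.coord 0) (eBasis.coord 6) ∈ basicSymmForms slL :=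
    symmProd_sub_symmProd_mem_basicSymmForms (hor (by decide)) (hor (by decide))
      (hor (by decide)) (hor (by decide)) fun _ ↦ exists_coord_lie_eq
  fin_cases k
  · exact mem_invariant (by simp) (by simp)
  · exact Submodule.smul_mem _ _ (mem_invariant (by simp) (by simp))
  · exact mem_invariant (by simp) (by simp)
  · exact Submodule.smul_mem _ _ mem_det
  · exact Submodule.smul_mem _ _ (mem_invariant (by simp) (by simp))
  · exact Submodule.smul_mem _ _ (mem_invariant (by simp) (by simp))
  · exact mem_invariant (by simp) (by simp)

lemma basicGenerator_apply_coeffIndex (k l : Fin 7) :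
    basicGenerator k (eSp (coeffIndex l).1) (eSp (coeffIndex l).2) = if k = l then 1 else 0 := by
  fin_cases k <;> fin_cases l <;>
    simp [basicGenerator, coeffIndex, symmProd_apply, coord_eSp, one_add_one_eq_two,
      -Module.Basis.coord_apply]

lemma eq_sum_smul_basicGenerator {B : LinearMap.BilinForm ℝ sp2}
    (hB : B ∈ basicSymmForms slL) :
    B = ∑ k, B (eSp (coeffIndex k).1) (eSp (coeffIndex k).2) • basicGenerator k := by
  have sum_mem : ∑ k, B (eSp (coeffIndex k).1) (eSp (coeffIndex k).2) • basicGenerator k ∈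
      basicSymmForms slL :=
    Submodule.sum_mem _ fun k _ ↦ Submodule.smul_mem _ _ (basicGenerator_mem_basicSymmForms k)
  refine eq_of_apply_coeffIndex_eq hB sum_mem fun l ↦ ?_
  simp [LinearMap.sum_apply, basicGenerator_apply_coeffIndex]

lemma span_range_basicGenerator :
    Submodule.span ℝ (Set.range basicGenerator) = basicSymmForms slL := by
  refine le_antisymm (Submodule.span_le.mpr ?_) fun B hB ↦ ?_
  · rintro _ ⟨k, rfl⟩
    exact basicGenerator_mem_basicSymmForms k
  · rw [Submodule.mem_span_range_iff_exists_fun]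
    exact ⟨_, (eq_sum_smul_basicGenerator hB).symm⟩

lemma linearIndependent_basicGenerator : LinearIndependent ℝ basicGenerator :=
  linearIndependent_of_apply_apply_eq_ite basicGenerator_apply_coeffIndex

lemma finrank_basicSymmForms_slL : Module.finrank ℝ (basicSymmForms slL) = 7 := by
  rw [← span_range_basicGenerator, finrank_span_eq_card linearIndependent_basicGenerator,
    Fintype.card_fin]

theorem statement9 (ε : Fin 10 → (sp2 →ₗ[ℝ] ℝ))
    (hdual : ∀ i j : Fin 10, ε i (eSp j) = if i = j then 1 else 0) :
    -- the equivalence, for any symmetric bilinear form B on 𝔤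
    (∀ B : sp2 →ₗ[ℝ] sp2 →ₗ[ℝ] ℝ, (∀ x y : sp2, B x y = B y x) →
      (((∀ x y : sp2, (x : Matrix (Fin 4) (Fin 4) ℝ) ∈ spanL → B x y = 0) ∧
        (∀ z x y : sp2, (z : Matrix (Fin 4) (Fin 4) ℝ) ∈ spanL →
          B ⁅z, x⁆ y + B x ⁅z, y⁆ = 0)) ↔
        (∃ g22 g24 g44 g35 g26 g46 g66 : ℝ, ∀ X Y : sp2,
          B X Y =
            g22 * sprod (ε 1) (ε 1) X Y +
            2 * g24 * sprod (ε 1) (ε 3) X Y +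
            g44 * sprod (ε 3) (ε 3) X Y +
            2 * g35 * (sprod (ε 2) (ε 4) X Y - sprod (ε 0) (ε 6) X Y) +
            2 * g26 * sprod (ε 1) (ε 5) X Y +
            2 * g46 * sprod (ε 3) (ε 5) X Y +
            g66 * sprod (ε 5) (ε 5) X Y))) ∧
    -- the space of such forms is 7-dimensional
    (∃ W : Submodule ℝ (sp2 →ₗ[ℝ] sp2 →ₗ[ℝ] ℝ),
      (W : Set (sp2 →ₗ[ℝ] sp2 →ₗ[ℝ] ℝ)) =
        {B | (∀ x y : sp2, B x y = B y x) ∧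
          (∀ x y : sp2, (x : Matrix (Fin 4) (Fin 4) ℝ) ∈ spanL → B x y = 0) ∧
          (∀ z x y : sp2, (z : Matrix (Fin 4) (Fin 4) ℝ) ∈ spanL →
            B ⁅z, x⁆ y + B x ⁅z, y⁆ = 0)} ∧
      Module.finrank ℝ W = 7) := by
  obtain rfl := eq_coord_eBasis hdual
  refine ⟨fun B symmB ↦ ⟨fun h ↦ ?_, ?_⟩, basicSymmForms slL, rfl, finrank_basicSymmForms_slL⟩
  · have hB := eq_sum_smul_basicGenerator (B := B) ⟨symmB, h⟩
    exact ⟨_, _, _, _, _, _, _, fun X Y ↦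
      (LinearMap.congr_fun₂ hB X Y).trans (sum_smul_basicGenerator_apply _ X Y)⟩
  · rintro ⟨g22, g24, g44, g35, g26, g46, g66, hB⟩
    suffices B ∈ basicSymmForms slL from this.2
    rw [← span_range_basicGenerator, Submodule.mem_span_range_iff_exists_fun]
    refine ⟨![g22, g24, g44, g35, g26, g46, g66], ?_⟩
    ext X Y
    rw [sum_smul_basicGenerator_apply, hB]
    rfl
end
end

section
/- An alternating 3-form φ on 𝔤 = sp(2,ℝ) satisfies (i) φ(x,·,·) = 0 whenever x ∈ span(f₈,f₉,f₁₀), and (ii) φ([z,x],y,w) + φ(x,[z,y],w) + φ(x,y,[z,w]) = 0 for all z ∈ span(f₈,f₉,f₁₀) and all x,y,w ∈ 𝔤, if and only if there exist real constants a, b, q, h, p such that φ = a(4f¹⁴⁷ + f²⁴⁶ + 2f³⁴⁵) + b(2f¹⁵⁶ + f²³⁶ − 4f¹³⁷) + q f¹³⁶ + h(f²⁵⁶ − 4f¹⁵⁷ − 2f²³⁷) + p f²⁵⁷. In particular, the space of such 3-forms is 5-dimensional. -/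
/-!
STATEMENT 17 (Proposition 6 of the paper): an alternating 3-form φ on 𝔤 = sp(2,ℝ)
annihilates span(f₈,f₉,f₁₀) and is infinitesimally invariant along it iff it is of the
form φ = a(4f¹⁴⁷ + f²⁴⁶ + 2f³⁴⁵) + b(2f¹⁵⁶ + f²³⁶ − 4f¹³⁷) + q f¹³⁶
+ h(f²⁵⁶ − 4f¹⁵⁷ − 2f²³⁷) + p f²⁵⁷; the space of such 3-forms is 5-dimensional.
Here f₁=E₁, f₂=E₃, f₃=E₄, f₄=E₆−E₅, f₅=E₇, f₆=E₈, f₇=E₁₀, f₈=E₂, f₉=E₅+E₆, f₁₀=E₉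
(0-based `fSp i` = f_{i+1}), `ε` is the dual basis (f^I), and f^{μνρ} = f^μ∧f^ν∧f^ρ is
the wedge (shuffle-sum convention), so that f^{μνρ}(X,Y,Z) is the 3×3 determinant
`trip` below.
-/

noncomputable section
open Matrix

attribute [local instance 100] LieRing.ofAssociativeRing

/-- The basis (f_I) (0-based) of sp(2,ℝ). -/
def fSp : Fin 10 → sp2 :=
  ![Esp 0, Esp 2, Esp 3, Esp 5 - Esp 4, Esp 6, Esp 7, Esp 9, Esp 1, Esp 4 + Esp 5, Esp 8]

/-- The wedge of three 1-forms (shuffle-sum convention), evaluated on a triple: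
(α∧β∧γ)(X,Y,Z) = det of the matrix of evaluations. -/
def trip (α β γ : sp2 →ₗ[ℝ] ℝ) (X Y Z : sp2) : ℝ :=
  α X * (β Y * γ Z - β Z * γ Y) - α Y * (β X * γ Z - β Z * γ X)
    + α Z * (β X * γ Y - β Y * γ X)

/-- span(f₈,f₉,f₁₀) = span(E₂, E₅+E₆, E₉), i.e. sl(2,ℝ)_s, inside the matrices. -/
def spanS : Submodule ℝ (Matrix (Fin 4) (Fin 4) ℝ) :=
  Submodule.span ℝ {E 1, E 4 + E 5, E 8}

/-!
The isotropy algebra `𝔰 = span(f₈, f₉, f₁₀) ≅ sl(2,ℝ)` acts on `𝔤/𝔰` as `V ⊕ V' ⊕ ℝ f₄`, where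
`V = span(f₁, f₃, f₆)` and `V' = span(f₂, f₅, f₇)` are copies of the adjoint representation and
`f₄` is fixed. A basic form is determined by its values on increasing triples from `f₁, …, f₇`,
and invariance under `f₉`, which acts diagonally, leaves only the thirteen triples of weight zero.
Invariance under the lowering operator `f₈` relates these thirteen coefficients, so that five of
them determine the form; five explicit basic forms are dual to these five coefficients.
-/

section LinearAlgebra

variable {R V ι : Type*} [CommRing R] [AddCommGroup V] [Module R V] [DecidableEq ι]

lemma eq_coord_of_dual (b : Module.Basis ι R V) {ε : ι → V →ₗ[R] R}
    (hdual : ∀ i j, ε i (b j) = if i = j then 1 else 0) : ε = b.coord :=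
  funext fun i ↦ b.ext fun j ↦ by
    rw [hdual, b.coord_apply, b.repr_self, Finsupp.single_apply]
    exact if_congr eq_comm rfl rfl

variable [Fintype ι] {W : Submodule R V} {ev : V →ₗ[R] ι → R} {ψ : ι → V}

lemma apply_sum_smul_of_dual (hdual : ∀ i, ev (ψ i) = Pi.single i 1)
    (c : ι → R) : ev (∑ i, c i • ψ i) = c := by
  simp only [map_sum, map_smul, hdual]
  exact (pi_eq_sum_univ' c).symm

lemma mem_iff_exists_eq_sum_smul_of_dual (hmem : ∀ i, ψ i ∈ W)
    (hdual : ∀ i, ev (ψ i) = Pi.single i 1) (hker : ∀ φ ∈ W, ev φ = 0 → φ = 0) (φ : V) :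
    φ ∈ W ↔ ∃ c : ι → R, φ = ∑ i, c i • ψ i := by
  have sum_mem (c : ι → R) : ∑ i, c i • ψ i ∈ W :=
    W.sum_mem fun i _ ↦ W.smul_mem _ (hmem i)
  refine ⟨fun hφ ↦ ⟨ev φ, sub_eq_zero.1 (hker _ (W.sub_mem hφ (sum_mem _)) ?_)⟩, ?_⟩
  · rw [map_sub, apply_sum_smul_of_dual hdual, sub_self]
  · rintro ⟨c, rfl⟩
    exact sum_mem c

lemma finrank_eq_card_of_dual [Nontrivial R] (hmem : ∀ i, ψ i ∈ W)
    (hdual : ∀ i, ev (ψ i) = Pi.single i 1) (hker : ∀ φ ∈ W, ev φ = 0 → φ = 0) :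
    Module.finrank R W = Fintype.card ι := by
  have hinj : Function.Injective (ev.domRestrict W) :=
    (injective_iff_map_eq_zero _).2 fun φ hφ ↦ Subtype.ext (hker φ φ.2 hφ)
  have hsurj : Function.Surjective (ev.domRestrict W) := fun c ↦
    ⟨⟨∑ i, c i • ψ i, W.sum_mem fun i _ ↦ W.smul_mem _ (hmem i)⟩,
      apply_sum_smul_of_dual hdual c⟩
  rw [(LinearEquiv.ofBijective _ ⟨hinj, hsurj⟩).finrank_eq, Module.finrank_fintype_fun_eq_card]

end LinearAlgebra

section AlternatingForms

variable {R M N : Type*} [CommRing R] [AddCommGroup M] [Module R M] [AddCommGroup N] [Module R N]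

lemma alternating_ext_strictMono {κ : Type*} [LinearOrder κ] {n : ℕ} (b : Module.Basis κ R M)
    {φ ψ : M [⋀^Fin n]→ₗ[R] N}
    (h : ∀ v : Fin n → κ, StrictMono v → φ (b ∘ v) = ψ (b ∘ v)) : φ = ψ := by
  refine b.ext_alternating fun v hv ↦ ?_
  have hsort : StrictMono (v ∘ Tuple.sort v) :=
    (Tuple.monotone_sort v).strictMono_of_injective (hv.comp (Tuple.sort v).injective)
  have heq := h _ hsort
  rw [← Function.comp_assoc, φ.map_perm, ψ.map_perm] at heq
  exact smul_left_cancel _ heq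

lemma alternating_ext_vec3 {φ ψ : M [⋀^Fin 3]→ₗ[R] N}
    (h : ∀ x y w, φ ![x, y, w] = ψ ![x, y, w]) : φ = ψ :=
  AlternatingMap.ext fun v ↦ FinVec.etaExpand_eq v ▸ h (v 0) (v 1) (v 2)

/-- The wedge product `α ∧ β ∧ γ` of three linear forms in the shuffle-sum convention, realised
as the determinant of the matrix of evaluations. -/
def wedge₃ (α β γ : M →ₗ[R] R) : M [⋀^Fin 3]→ₗ[R] R :=
  (Matrix.detRowAlternating : (Fin 3 → R) [⋀^Fin 3]→ₗ[R] R).compLinearMap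
    (LinearMap.pi ![α, β, γ])

lemma wedge₃_apply (α β γ : M →ₗ[R] R) (x y w : M) :
    wedge₃ α β γ ![x, y, w] =
      α x * (β y * γ w - β w * γ y) - α y * (β x * γ w - β w * γ x)
        + α w * (β x * γ y - β y * γ x) := by
  change Matrix.det (Matrix.of fun i j ↦ (![α, β, γ] : Fin 3 → M →ₗ[R] R) j (![x, y, w] i)) = _
  simp only [Matrix.det_fin_three, Matrix.of_apply, Matrix.cons_val]
  ring

variable (φ : M [⋀^Fin 3]→ₗ[R] N)

lemma alternating_smul_left (c : R) (x y w : M) : φ ![c • x, y, w] = c • φ ![x, y, w] :=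
  φ.map_vecCons_smul ![y, w] c x

lemma alternating_smul_mid (c : R) (x y w : M) : φ ![x, c • y, w] = c • φ ![x, y, w] :=
  (φ.curryLeft x).map_vecCons_smul ![w] c y

lemma alternating_smul_right (c : R) (x y w : M) : φ ![x, y, c • w] = c • φ ![x, y, w] :=
  ((φ.curryLeft x).curryLeft y).map_vecCons_smul ![] c w

lemma alternating_swap_left (x y w : M) : φ ![y, x, w] = -φ ![x, y, w] := by
  rw [← φ.map_swap ![x, y, w] (i := 0) (j := 1) (by decide)]
  congr 1
  ext i
  fin_cases i <;> rfl

lemma alternating_swap_right (x y w : M) : φ ![x, w, y] = -φ ![x, y, w] := by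
  rw [← φ.map_swap ![x, y, w] (i := 1) (j := 2) (by decide)]
  congr 1
  ext i
  fin_cases i <;> rfl

end AlternatingForms

section BasicForms

variable {R L : Type*} [CommRing R] [LieRing L] [LieAlgebra R L]

/-- The `K`-basic 3-forms on a Lie algebra, for a subspace `K`: those annihilated by contraction
with `K` and by the Lie derivative along `K`. When `K` is the Lie algebra of a connected closed
subgroup, these are the left-invariant 3-forms that descend to the homogeneous space. -/
def basicThreeForms (K : Submodule R L) : Submodule R (L [⋀^Fin 3]→ₗ[R] R) where
  carrier := {φ | (∀ x y z : L, x ∈ K → φ ![x, y, z] = 0) ∧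
    ∀ z x y w : L, z ∈ K → φ ![⁅z, x⁆, y, w] + φ ![x, ⁅z, y⁆, w] + φ ![x, y, ⁅z, w⁆] = 0}
  zero_mem' := by simp
  add_mem' {φ ψ} hφ hψ := by
    refine ⟨fun x y z hx ↦ ?_, fun z x y w hz ↦ ?_⟩
    · rw [AlternatingMap.add_apply, hφ.1 x y z hx, hψ.1 x y z hx, add_zero]
    · simp only [AlternatingMap.add_apply]
      linear_combination hφ.2 z x y w hz + hψ.2 z x y w hz
  smul_mem' c φ hφ := by
    refine ⟨fun x y z hx ↦ ?_, fun z x y w hz ↦ ?_⟩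
    · rw [AlternatingMap.smul_apply, hφ.1 x y z hx, smul_zero]
    · simp only [AlternatingMap.smul_apply, smul_eq_mul]
      linear_combination c * hφ.2 z x y w hz

variable {K : Submodule R L} {φ : L [⋀^Fin 3]→ₗ[R] R}

lemma apply_eq_zero_of_lie_eq_smul [IsDomain R] (hφ : φ ∈ basicThreeForms K) {h : L} (hh : h ∈ K)
    {x y w : L} {a b c : R} (hx : ⁅h, x⁆ = a • x) (hy : ⁅h, y⁆ = b • y) (hw : ⁅h, w⁆ = c • w)
    (habc : a + b + c ≠ 0) : φ ![x, y, w] = 0 := by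
  have hinv := hφ.2 h x y w hh
  rw [hx, hy, hw, alternating_smul_left, alternating_smul_mid, alternating_smul_right,
    ← add_smul, ← add_smul] at hinv
  exact (smul_eq_zero.1 hinv).resolve_left habc

lemma apply_eq_zero_of_right_mem (hφ : φ ∈ basicThreeForms K) {w : L} (hw : w ∈ K) (x y : L) :
    φ ![x, y, w] = 0 := by
  rw [alternating_swap_right, alternating_swap_left, hφ.1 w x y hw, neg_zero, neg_zero]

/-- A string `x₂ ↦ x₁ ↦ x₀ ↦ 0` under `ad z`: the shape of the three-dimensional irreducible
representation of `sl₂`, with `z` as lowering operator and index `i` having weight `2 * i - 2`. -/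
structure IsLoweringString (z x₂ x₁ x₀ : L) : Prop where
  lie_two : ⁅z, x₂⁆ = x₁
  lie_one : ⁅z, x₁⁆ = x₀
  lie_zero : ⁅z, x₀⁆ = 0

variable {z x₂ x₁ x₀ y₂ y₁ y₀ t : L}

lemma IsLoweringString.apply_left_right (hφ : φ ∈ basicThreeForms K) (hz : z ∈ K)
    (hx : IsLoweringString z x₂ x₁ x₀) (hy : IsLoweringString z y₂ y₁ y₀) (ht : ⁅z, t⁆ = 0) :
    φ ![x₀, t, y₂] = -φ ![x₁, t, y₁] := by
  have hinv := hφ.2 z x₁ t y₂ hz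
  rw [hx.lie_one, ht, hy.lie_two, φ.map_coord_zero (m := ![x₁, 0, y₂]) 1 rfl] at hinv
  linear_combination hinv

lemma IsLoweringString.apply_outer_swap (hφ : φ ∈ basicThreeForms K) (hz : z ∈ K)
    (hx : IsLoweringString z x₂ x₁ x₀) (hy : IsLoweringString z y₂ y₁ y₀) (ht : ⁅z, t⁆ = 0) :
    φ ![y₀, t, x₂] = -φ ![x₀, t, y₂] := by
  rw [hx.apply_left_right hφ hz hy ht, hy.apply_left_right hφ hz hx ht,
    alternating_swap_left φ t y₁ x₁, alternating_swap_right φ t x₁ y₁,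
    alternating_swap_left φ x₁ t y₁]
  simp only [neg_neg]

lemma IsLoweringString.apply_fixed_self (hφ : φ ∈ basicThreeForms K) (hz : z ∈ K)
    (hx : IsLoweringString z x₂ x₁ x₀) (ht : ⁅z, t⁆ = 0) : φ ![x₀, t, x₂] = 0 := by
  rw [hx.apply_left_right hφ hz hx ht,
    φ.map_eq_zero_of_eq ![x₁, t, x₁] (i := 0) (j := 2) rfl (by decide), neg_zero]

lemma IsLoweringString.apply_pair_top (hφ : φ ∈ basicThreeForms K) (hz : z ∈ K)
    (hx : IsLoweringString z x₂ x₁ x₀) (hy : IsLoweringString z y₂ y₁ y₀) :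
    φ ![x₀, x₁, y₂] = φ ![x₀, y₁, x₂] := by
  have hinv := hφ.2 z x₀ y₂ x₂ hz
  rw [hx.lie_zero, hy.lie_two, hx.lie_two, φ.map_coord_zero (m := ![0, y₂, x₂]) 0 rfl,
    alternating_swap_right φ x₀ x₁ y₂] at hinv
  linear_combination -hinv

lemma IsLoweringString.apply_pair_bot (hφ : φ ∈ basicThreeForms K) (hz : z ∈ K)
    (hx : IsLoweringString z x₂ x₁ x₀) (hy : IsLoweringString z y₂ y₁ y₀) :
    φ ![x₀, y₁, x₂] = φ ![y₀, x₁, x₂] := by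
  have hinv := hφ.2 z y₁ x₁ x₂ hz
  rw [hy.lie_one, hx.lie_one, hx.lie_two, alternating_swap_left φ x₀ y₁ x₂,
    φ.map_eq_zero_of_eq ![y₁, x₁, x₁] (i := 1) (j := 2) rfl (by decide)] at hinv
  linear_combination -hinv

end BasicForms

section Coordinates

lemma sp2_apply_relations (X : sp2) :
    X.1 1 3 = X.1 0 2 ∧ X.1 2 2 = -X.1 1 1 ∧ X.1 2 3 = -X.1 0 1 ∧
      X.1 3 1 = X.1 2 0 ∧ X.1 3 2 = -X.1 1 0 ∧ X.1 3 3 = -X.1 0 0 := by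
  have hX (i j : Fin 4) : ∑ k, X.1 k i * Jm k j + ∑ k, Jm i k * X.1 k j = 0 :=
    congrFun₂ X.2 i j
  have h01 := hX 0 1
  have h02 := hX 0 2
  have h03 := hX 0 3
  have h12 := hX 1 2
  have h13 := hX 1 3
  have h23 := hX 2 3
  simp only [Jm, of_apply, cons_val', cons_val_one, cons_val_zero, cons_val_fin_one,
    Fin.sum_univ_four, mul_zero, add_zero, cons_val, mul_neg, mul_one, zero_add, zero_mul, one_mul,
    neg_mul] at h01 h02 h03 h12 h13 h23
  refine ⟨?_, ?_, ?_, ?_, ?_, ?_⟩ <;> linarith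

/-- The general element `∑ i, c i • f_{i+1}` of `sp(2,ℝ)` in the basis `fSp`. -/
def fMat (c : Fin 10 → ℝ) : Matrix (Fin 4) (Fin 4) ℝ :=
  Emat ![c 0, c 7, c 1, c 2, c 8 - c 3, c 8 + c 3, c 4, c 5, c 9, c 6]

lemma fMat_single (i : Fin 10) : fMat (Pi.single i 1) = fSp i := by
  fin_cases i <;> simp [fMat, fSp, Esp, E, Emat]

lemma lie_fMat (r s t : ℝ) (c : Fin 10 → ℝ) :
    ⁅fMat ![0, 0, 0, 0, 0, 0, 0, r, s, t], fMat c⁆ =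
      fMat ![r * c 2 - 2 * s * c 0,
        2 * r * c 4 - 2 * s * c 1,
        r * c 5 + 2 * t * c 0,
        0,
        t * c 1 - 2 * r * c 6,
        2 * s * c 5 + 2 * t * c 2,
        2 * s * c 6 - t * c 4,
        2 * r * c 8 - 2 * s * c 7,
        t * c 7 - r * c 9,
        2 * s * c 9 - 2 * t * c 8] := by
  rw [Ring.lie_def]
  ext i j
  rw [Matrix.sub_apply, Matrix.mul_apply, Matrix.mul_apply, Fin.sum_univ_four, Fin.sum_univ_four]
  fin_cases i <;> fin_cases j <;> simp [fMat, Emat] <;> ring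

/-- Coordinates on `sp(2,ℝ)` with respect to the basis `fSp`. -/
def coords : sp2 ≃ₗ[ℝ] (Fin 10 → ℝ) where
  toFun X := ![-X.1 3 0 / 2, X.1 2 1, -X.1 1 0, (X.1 1 1 - X.1 0 0) / 2, X.1 0 1, X.1 1 2,
    X.1 0 3 / 2, X.1 2 0, (X.1 0 0 + X.1 1 1) / 2, X.1 0 2]
  map_add' X Y := by
    ext i
    fin_cases i <;> simp <;> ring
  map_smul' c X := by
    ext i
    fin_cases i <;> simp <;> ring
  invFun c := ⟨fMat c, Emat_rel _⟩
  left_inv X := by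
    obtain ⟨h13, h22, h23, h31, h32, h33⟩ := sp2_apply_relations X
    ext i j
    fin_cases i <;> fin_cases j <;> simp [fMat, Emat] <;> linarith
  right_inv c := by
    ext i
    fin_cases i <;> simp [fMat, Emat]

lemma coords_symm_single (i : Fin 10) : coords.symm (Pi.single i 1) = fSp i :=
  Subtype.ext (fMat_single i)

lemma coords_fSp (i : Fin 10) : coords (fSp i) = Pi.single i 1 := by
  rw [← coords_symm_single, coords.apply_symm_apply]

/-- `fSp` as a basis of `sp(2,ℝ)`. -/
def fBasis : Module.Basis (Fin 10) ℝ sp2 := Module.Basis.ofEquivFun coords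

lemma fBasis_apply (i : Fin 10) : fBasis i = fSp i := by
  simp only [fBasis, Module.Basis.coe_ofEquivFun, coords_symm_single]

lemma fBasis_repr_apply (X : sp2) (i : Fin 10) : fBasis.repr X i = coords X i := rfl

end Coordinates

section Isotropy

/-- The subalgebra `sl(2,ℝ)_s = span(f₈, f₉, f₁₀)` as a subspace of `sp(2,ℝ)`. -/
def isotropy : Submodule ℝ sp2 := spanS.comap sp2.toSubmodule.subtype

lemma mem_isotropy_iff {z : sp2} :
    z ∈ isotropy ↔ ∃ r s t : ℝ, coords z = ![0, 0, 0, 0, 0, 0, 0, r, s, t] := by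
  rw [isotropy, Submodule.mem_comap, spanS, Submodule.mem_span_triple]
  refine exists₃_congr fun r s t ↦ ?_
  rw [← LinearEquiv.eq_symm_apply, eq_comm, Subtype.ext_iff]
  have hsymm : (coords.symm ![0, 0, 0, 0, 0, 0, 0, r, s, t] : Matrix (Fin 4) (Fin 4) ℝ) =
      r • E 1 + s • (E 4 + E 5) + t • E 8 := by
    change fMat _ = _
    simp [fMat, E, Emat]
  rw [hsymm]
  rfl

lemma fSp_mem_isotropy {i : Fin 10} (hi : 7 ≤ i) : fSp i ∈ isotropy := by
  refine Submodule.subset_span (?_ : (fSp i : Matrix (Fin 4) (Fin 4) ℝ) ∈ _)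
  fin_cases i <;> simp [fSp, Esp] at hi ⊢

lemma coords_lie {z : sp2} {r s t : ℝ} (hz : coords z = ![0, 0, 0, 0, 0, 0, 0, r, s, t])
    (X : sp2) :
    coords ⁅z, X⁆ =
      ![r * coords X 2 - 2 * s * coords X 0,
        2 * r * coords X 4 - 2 * s * coords X 1,
        r * coords X 5 + 2 * t * coords X 0,
        0,
        t * coords X 1 - 2 * r * coords X 6,
        2 * s * coords X 5 + 2 * t * coords X 2,
        2 * s * coords X 6 - t * coords X 4,
        2 * r * coords X 8 - 2 * s * coords X 7,
        t * coords X 7 - r * coords X 9,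
        2 * s * coords X 9 - 2 * t * coords X 8] := by
  obtain ⟨c, rfl⟩ := coords.symm.surjective X
  rw [← LinearEquiv.eq_symm_apply] at hz ⊢
  rw [hz, coords.apply_symm_apply]
  exact Subtype.ext (lie_fMat r s t c)

lemma coords_fSp_seven : coords (fSp 7) = ![0, 0, 0, 0, 0, 0, 0, 1, 0, 0] := by
  rw [coords_fSp]
  ext i
  fin_cases i <;> rfl

lemma coords_fSp_eight : coords (fSp 8) = ![0, 0, 0, 0, 0, 0, 0, 0, 1, 0] := by
  rw [coords_fSp]
  ext i
  fin_cases i <;> rfl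

/-- The eigenvalues of `ad f₉` on the basis `fSp`. -/
def weight : Fin 10 → ℤ := ![-2, -2, 0, 0, 0, 2, 2, -2, 0, 2]

lemma lie_fSp_eight (i : Fin 10) : ⁅fSp 8, fSp i⁆ = (weight i : ℝ) • fSp i := by
  apply coords.injective
  rw [coords_lie coords_fSp_eight, map_smul, coords_fSp]
  ext j
  fin_cases i <;> fin_cases j <;> simp [weight]

lemma lie_fSp_seven (i : Fin 10) :
    ⁅fSp 7, fSp i⁆ = (![0, 0, fSp 0, 0, (2 : ℝ) • fSp 1, fSp 2, (-2 : ℝ) • fSp 4,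
      0, (2 : ℝ) • fSp 7, -fSp 8] : Fin 10 → sp2) i := by
  apply coords.injective
  rw [coords_lie coords_fSp_seven, coords_fSp]
  fin_cases i <;> ext j <;> fin_cases j <;> simp [coords_fSp]

lemma isLoweringString_fSp_five : IsLoweringString (fSp 7) (fSp 5) (fSp 2) (fSp 0) :=
  ⟨lie_fSp_seven 5, lie_fSp_seven 2, lie_fSp_seven 0⟩

lemma isLoweringString_fSp_six :
    IsLoweringString (fSp 7) (fSp 6) ((-2 : ℝ) • fSp 4) ((-4 : ℝ) • fSp 1) where
  lie_two := lie_fSp_seven 6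
  lie_one := by
    rw [lie_smul, lie_fSp_seven 4]
    simp only [Matrix.cons_val, smul_smul]
    norm_num
  lie_zero := by
    rw [lie_smul, lie_fSp_seven 1]
    simp

end Isotropy

section Classification

/-- The five basic forms multiplying `a`, `b`, `q`, `h`, `p` in the classification. -/
def basicForm : Fin 5 → sp2 [⋀^Fin 3]→ₗ[ℝ] ℝ :=
  let f (i j k : Fin 10) := wedge₃ (fBasis.coord i) (fBasis.coord j) (fBasis.coord k)
  ![(4 : ℝ) • f 0 3 6 + f 1 3 5 + (2 : ℝ) • f 2 3 4,
    (2 : ℝ) • f 0 4 5 + f 1 2 5 - (4 : ℝ) • f 0 2 6,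
    f 0 2 5,
    f 1 4 5 - (4 : ℝ) • f 0 4 6 - (2 : ℝ) • f 1 2 6,
    f 1 4 6]

lemma basicForm_mem (n : Fin 5) : basicForm n ∈ basicThreeForms isotropy := by
  constructor
  · intro x y w hx
    obtain ⟨r, s, t, hx⟩ := mem_isotropy_iff.1 hx
    fin_cases n <;> simp [basicForm, wedge₃_apply, fBasis_repr_apply, hx]
  · intro z x y w hz
    obtain ⟨r, s, t, hz⟩ := mem_isotropy_iff.1 hz
    fin_cases n <;>
      simp [basicForm, wedge₃_apply, fBasis_repr_apply, coords_lie hz] <;> ring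

/-- The coefficients of a 3-form at `f²⁴⁶`, `f²³⁶`, `f¹³⁶`, `f²⁵⁶`, `f²⁵⁷`, each of which occurs in
exactly one of the five `basicForm`s. -/
def pivotValues : (sp2 [⋀^Fin 3]→ₗ[ℝ] ℝ) →ₗ[ℝ] (Fin 5 → ℝ) where
  toFun φ := ![φ ![fSp 1, fSp 3, fSp 5], φ ![fSp 1, fSp 2, fSp 5], φ ![fSp 0, fSp 2, fSp 5],
    φ ![fSp 1, fSp 4, fSp 5], φ ![fSp 1, fSp 4, fSp 6]]
  map_add' φ ψ := by
    ext n
    fin_cases n <;> rfl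
  map_smul' c φ := by
    ext n
    fin_cases n <;> rfl

lemma pivotValues_basicForm (n : Fin 5) : pivotValues (basicForm n) = Pi.single n 1 := by
  ext m
  fin_cases n <;> fin_cases m <;>
    simp [pivotValues, basicForm, wedge₃_apply, fBasis_repr_apply, coords_fSp]

lemma weight_zero_triples : ∀ i j k : Fin 10, i < j → j < k → k < 7 →
    weight i + weight j + weight k = 0 →
    (i, j, k) ∈ ([(0, 2, 5), (0, 2, 6), (0, 3, 5), (0, 3, 6), (0, 4, 5), (0, 4, 6), (1, 2, 5),
      (1, 2, 6), (1, 3, 5), (1, 3, 6), (1, 4, 5), (1, 4, 6), (2, 3, 4)] :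
        List (Fin 10 × Fin 10 × Fin 10)) := by
  decide

variable {φ : sp2 [⋀^Fin 3]→ₗ[ℝ] ℝ}

lemma apply_fSp_eq_zero (hφ : φ ∈ basicThreeForms isotropy) {i j k : Fin 10}
    (h : 7 ≤ k ∨ weight i + weight j + weight k ≠ 0) : φ ![fSp i, fSp j, fSp k] = 0 := by
  rcases h with hk | hweight
  · exact apply_eq_zero_of_right_mem hφ (fSp_mem_isotropy hk) _ _
  · exact apply_eq_zero_of_lie_eq_smul hφ (fSp_mem_isotropy (by decide : (7 : Fin 10) ≤ 8))
      (lie_fSp_eight i) (lie_fSp_eight j) (lie_fSp_eight k) (by exact_mod_cast hweight)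

lemma apply_fSp_fixed_relations (hφ : φ ∈ basicThreeForms isotropy) :
    φ ![fSp 0, fSp 3, fSp 5] = 0 ∧ φ ![fSp 1, fSp 3, fSp 6] = 0 ∧
      φ ![fSp 0, fSp 3, fSp 6] = 4 * φ ![fSp 1, fSp 3, fSp 5] ∧
      φ ![fSp 2, fSp 3, fSp 4] = 2 * φ ![fSp 1, fSp 3, fSp 5] := by
  have hz : fSp 7 ∈ isotropy := fSp_mem_isotropy le_rfl
  have ht : ⁅fSp 7, fSp 3⁆ = 0 := lie_fSp_seven 3
  have hV := isLoweringString_fSp_five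
  have hV' := isLoweringString_fSp_six
  have h136 := hV'.apply_fixed_self hφ hz ht
  have h036 := hV.apply_outer_swap hφ hz hV' ht
  have h234 := hV.apply_left_right hφ hz hV' ht
  simp only [alternating_smul_left, alternating_smul_right, smul_eq_mul] at h136 h036 h234
  exact ⟨hV.apply_fixed_self hφ hz ht, by linarith, by linarith, by linarith⟩

lemma apply_fSp_pair_relations (hφ : φ ∈ basicThreeForms isotropy) :
    φ ![fSp 0, fSp 2, fSp 6] = -4 * φ ![fSp 1, fSp 2, fSp 5] ∧
      φ ![fSp 0, fSp 4, fSp 5] = 2 * φ ![fSp 1, fSp 2, fSp 5] ∧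
      φ ![fSp 0, fSp 4, fSp 6] = -4 * φ ![fSp 1, fSp 4, fSp 5] ∧
      φ ![fSp 1, fSp 2, fSp 6] = -2 * φ ![fSp 1, fSp 4, fSp 5] := by
  have hz : fSp 7 ∈ isotropy := fSp_mem_isotropy le_rfl
  have hV := isLoweringString_fSp_five
  have hV' := isLoweringString_fSp_six
  have h026 := hV.apply_pair_top hφ hz hV'
  have h045 := hV.apply_pair_bot hφ hz hV'
  have h126 := hV'.apply_pair_top hφ hz hV
  have h046 := hV'.apply_pair_bot hφ hz hV
  simp only [alternating_smul_left, alternating_smul_mid, smul_eq_mul] at h026 h045 h126 h046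
  refine ⟨?_, ?_, ?_, ?_⟩ <;> linarith

lemma eq_zero_of_pivotValues_eq_zero (hφ : φ ∈ basicThreeForms isotropy)
    (hpivot : pivotValues φ = 0) : φ = 0 := by
  have h135 : φ ![fSp 1, fSp 3, fSp 5] = 0 := congrFun hpivot 0
  have h125 : φ ![fSp 1, fSp 2, fSp 5] = 0 := congrFun hpivot 1
  have h025 : φ ![fSp 0, fSp 2, fSp 5] = 0 := congrFun hpivot 2
  have h145 : φ ![fSp 1, fSp 4, fSp 5] = 0 := congrFun hpivot 3
  have h146 : φ ![fSp 1, fSp 4, fSp 6] = 0 := congrFun hpivot 4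
  obtain ⟨h035, h136, h036, h234⟩ := apply_fSp_fixed_relations hφ
  obtain ⟨h026, h045, h046, h126⟩ := apply_fSp_pair_relations hφ
  rw [h135, mul_zero] at h036 h234
  rw [h125, mul_zero] at h026 h045
  rw [h145, mul_zero] at h046 h126
  refine alternating_ext_strictMono fBasis fun v hv ↦ ?_
  have hbasis : fBasis ∘ v = ![fSp (v 0), fSp (v 1), fSp (v 2)] := by
    ext1 m
    fin_cases m <;> exact fBasis_apply _
  rw [hbasis, AlternatingMap.zero_apply]
  have h01 : v 0 < v 1 := hv (by decide)
  have h12 : v 1 < v 2 := hv (by decide)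
  generalize v 0 = i, v 1 = j, v 2 = k at h01 h12 ⊢
  by_cases h : 7 ≤ k ∨ weight i + weight j + weight k ≠ 0
  · exact apply_fSp_eq_zero hφ h
  · push Not at h
    have hmem := weight_zero_triples i j k h01 h12 h.1 h.2
    simp only [List.mem_cons, Prod.mk.injEq, List.not_mem_nil, or_false] at hmem
    rcases hmem with ⟨rfl, rfl, rfl⟩ | ⟨rfl, rfl, rfl⟩ | ⟨rfl, rfl, rfl⟩ | ⟨rfl, rfl, rfl⟩ |
      ⟨rfl, rfl, rfl⟩ | ⟨rfl, rfl, rfl⟩ | ⟨rfl, rfl, rfl⟩ | ⟨rfl, rfl, rfl⟩ | ⟨rfl, rfl, rfl⟩ |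
      ⟨rfl, rfl, rfl⟩ | ⟨rfl, rfl, rfl⟩ | ⟨rfl, rfl, rfl⟩ | ⟨rfl, rfl, rfl⟩ <;> assumption

lemma sum_basicForm_apply (c : Fin 5 → ℝ) (X Y Z : sp2) :
    (∑ n, c n • basicForm n) ![X, Y, Z] =
      let f (i j k : Fin 10) := trip (fBasis.coord i) (fBasis.coord j) (fBasis.coord k) X Y Z
      c 0 * (4 * f 0 3 6 + f 1 3 5 + 2 * f 2 3 4) +
        c 1 * (2 * f 0 4 5 + f 1 2 5 - 4 * f 0 2 6) +
        c 2 * f 0 2 5 +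
        c 3 * (f 1 4 5 - 4 * f 0 4 6 - 2 * f 1 2 6) +
        c 4 * f 1 4 6 := by
  simp [Fin.sum_univ_five, basicForm, wedge₃_apply, trip]
  ring

end Classification

theorem statement17 (ε : Fin 10 → (sp2 →ₗ[ℝ] ℝ))
    (hdual : ∀ i j : Fin 10, ε i (fSp j) = if i = j then 1 else 0) :
    -- the equivalence, for any alternating 3-form φ on 𝔤
    (∀ φ : AlternatingMap ℝ sp2 ℝ (Fin 3),
      ((∀ x y z : sp2, (x : Matrix (Fin 4) (Fin 4) ℝ) ∈ spanS → φ ![x, y, z] = 0) ∧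
       (∀ z x y w : sp2, (z : Matrix (Fin 4) (Fin 4) ℝ) ∈ spanS →
         φ ![⁅z, x⁆, y, w] + φ ![x, ⁅z, y⁆, w] + φ ![x, y, ⁅z, w⁆] = 0)) ↔
      (∃ a b q h p : ℝ, ∀ X Y Z : sp2,
        φ ![X, Y, Z] =
          a * (4 * trip (ε 0) (ε 3) (ε 6) X Y Z + trip (ε 1) (ε 3) (ε 5) X Y Z +
            2 * trip (ε 2) (ε 3) (ε 4) X Y Z) +
          b * (2 * trip (ε 0) (ε 4) (ε 5) X Y Z + trip (ε 1) (ε 2) (ε 5) X Y Z -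
            4 * trip (ε 0) (ε 2) (ε 6) X Y Z) +
          q * trip (ε 0) (ε 2) (ε 5) X Y Z +
          h * (trip (ε 1) (ε 4) (ε 5) X Y Z - 4 * trip (ε 0) (ε 4) (ε 6) X Y Z -
            2 * trip (ε 1) (ε 2) (ε 6) X Y Z) +
          p * trip (ε 1) (ε 4) (ε 6) X Y Z)) ∧
    -- the space of such 3-forms is 5-dimensional
    (∃ W : Submodule ℝ (AlternatingMap ℝ sp2 ℝ (Fin 3)),
      (W : Set (AlternatingMap ℝ sp2 ℝ (Fin 3))) =
        {φ | (∀ x y z : sp2, (x : Matrix (Fin 4) (Fin 4) ℝ) ∈ spanS → φ ![x, y, z] = 0) ∧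
          (∀ z x y w : sp2, (z : Matrix (Fin 4) (Fin 4) ℝ) ∈ spanS →
            φ ![⁅z, x⁆, y, w] + φ ![x, ⁅z, y⁆, w] + φ ![x, y, ⁅z, w⁆] = 0)} ∧
      Module.finrank ℝ W = 5) := by
  obtain rfl : ε = fBasis.coord :=
    eq_coord_of_dual fBasis (by simpa only [fBasis_apply] using hdual)
  have hker : ∀ φ ∈ basicThreeForms isotropy, pivotValues φ = 0 → φ = 0 :=
    fun _ ↦ eq_zero_of_pivotValues_eq_zero
  refine ⟨fun φ ↦ ?_, basicThreeForms isotropy, rfl, ?_⟩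
  · refine (mem_iff_exists_eq_sum_smul_of_dual basicForm_mem pivotValues_basicForm hker φ).trans
      ⟨?_, ?_⟩
    · rintro ⟨c, rfl⟩
      exact ⟨c 0, c 1, c 2, c 3, c 4, sum_basicForm_apply c⟩
    · rintro ⟨a, b, q, h, p, hφ⟩
      exact ⟨![a, b, q, h, p], alternating_ext_vec3 fun X Y Z ↦
        (hφ X Y Z).trans (sum_basicForm_apply ![a, b, q, h, p] X Y Z).symm⟩
  · exact finrank_eq_card_of_dual basicForm_mem pivotValues_basicForm hker
end
end
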